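/- Let 1 < p < ∞ and 0 < s < 1. For ε > 0 define g_ε^{(1)}(x) = ∫_{{y ∈ ℝ : |x−y| ≥ ε}} J_p(x^s − (y₊)^s) / |x−y|^{1+sp} dy for x > 0, where y₊ = max{y,0}. Then g_ε^{(1)} → 0 uniformly on every compact subset K ⊂ (0,∞) as ε → 0. -/

import Mathlib

/-!
The function `x₊ ^ s` is `(s, p)`-harmonic on the half-line, and the proof makes this explicit.

By homogeneity (`gOneDim_scale`), `g_ε(x) = x ^ (-s) * g_{ε/x}(1)`, so on a compact subset of
`(0, ∞)`, which stays away from `0`, it suffices to estimate `g_δ(1)` for small `δ`. The half-line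
`y ≤ 0` contributes `1 / (sp)`. The substitution `y = 1 / z` moves the part `y ≥ 1 + δ` to
`0 < z ≤ 1 / (1 + δ)`, where its integrand is `-z ^ (s - 1)` times that of the part
`0 < y ≤ 1 - δ`. The difference of the two integrands on `(0, 1 - δ)` has the explicit primitive
`(1 - z ^ s) ^ p * (1 - z) ^ (-sp) / (sp)` (`hasDerivAt_primitive`), whose value at `0` cancels
the contribution `1 / (sp)`. What remains (`gOneDim_one_eq`) is the value of the primitive at
`1 - δ` and an integral over `(1 - δ, 1 / (1 + δ)]`, an interval of length at most `δ ^ 2`; both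
are `O(δ ^ (p (1 - s)))` (`abs_gOneDim_one_le`), and `p (1 - s) > 0`.
-/

open MeasureTheory Real Filter Topology ENNReal

noncomputable section

/-- The Heisenberg group `ℍⁿ` as `ℝⁿ × ℝⁿ × ℝ`. -/
abbrev Heis (n : ℕ) : Type := (Fin n → ℝ) × (Fin n → ℝ) × ℝ

/-- Group law `ξ ∘ ξ' = (x+x', y+y', t+t'+2⟨y,x'⟩−2⟨x,y'⟩)`. -/
def Hmul {n : ℕ} (a b : Heis n) : Heis n :=
  (a.1 + b.1, a.2.1 + b.2.1,
    a.2.2 + b.2.2 + 2 * (∑ i, a.2.1 i * b.1 i) - 2 * (∑ i, a.1 i * b.2.1 i))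

/-- Group inverse `ξ⁻¹ = −ξ`. -/
def Hinv {n : ℕ} (a : Heis n) : Heis n := (-a.1, -a.2.1, -a.2.2)

/-- Squared Euclidean norm of the horizontal part `z = (x,y) ∈ ℝ^{2n}`. -/
def zsq {n : ℕ} (a : Heis n) : ℝ := (∑ i, (a.1 i) ^ 2) + (∑ i, (a.2.1 i) ^ 2)

/-- Euclidean norm `|z|` of the horizontal part. -/
def znorm {n : ℕ} (a : Heis n) : ℝ := Real.sqrt (zsq a)

/-- The Koranyi–Folland gauge `d(ξ) = (|z|⁴ + t²)^{1/4}`. -/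
def hd {n : ℕ} (a : Heis n) : ℝ := ((zsq a) ^ 2 + (a.2.2) ^ 2) ^ ((1 : ℝ) / 4)

/-- Homogeneous dimension `Q = 2n + 2` (as a real number). -/
def hQ (n : ℕ) : ℝ := 2 * n + 2

/-- First coordinate `x₁` of a point of `ℍⁿ`. -/
def x1 {n : ℕ} (a : Heis n) : ℝ := if h : 0 < n then a.1 ⟨0, h⟩ else 0

/-- The half-space `ℍⁿ₊ = {ξ : x₁ > 0}`. -/
def halfSpace (n : ℕ) : Set (Heis n) := {a | 0 < x1 a}

/-- Euclidean distance `|z - z'|` of the horizontal parts. -/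
def zdist {n : ℕ} (a b : Heis n) : ℝ := znorm (Hmul (Hinv a) b)

/-- `J_p(t) = |t|^{p-2} t`. -/
def Jp (p t : ℝ) : ℝ := |t| ^ (p - 2) * t

/-- The Gagliardo-type seminorm (to the `p`-th power)
`[f]_{s,p,α,Ω}^p = ∫_Ω ∫_Ω |f(ξ)-f(ξ')|^p / (d(ξ⁻¹∘ξ')^{Q+sp} |z-z'|^α)`. -/
def gagSem {n : ℕ} (p s α : ℝ) (Ω : Set (Heis n)) (f : Heis n → ℝ) : ℝ≥0∞ :=
  ∫⁻ ξ in Ω, ∫⁻ ξ' in Ω, ENNReal.ofReal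
    (|f ξ - f ξ'| ^ p / (hd (Hmul (Hinv ξ) ξ') ^ (hQ n + s * p) * zdist ξ ξ' ^ α))

/-- The seminorm for `α = 0` (no horizontal weight). -/
def gagSem0 {n : ℕ} (p s : ℝ) (Ω : Set (Heis n)) (f : Heis n → ℝ) : ℝ≥0∞ :=
  ∫⁻ ξ in Ω, ∫⁻ ξ' in Ω, ENNReal.ofReal
    (|f ξ - f ξ'| ^ p / hd (Hmul (Hinv ξ) ξ') ^ (hQ n + s * p))

/-- The strip `𝒟_{r,R} = {ξ : r < x₁ < R}`. -/
def strip (n : ℕ) (r R : ℝ) : Set (Heis n) := {ξ | r < x1 ξ ∧ x1 ξ < R}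

/-- `f ∈ W^{s,p,α}_{loc(x₁)}(ℍⁿ₊)`. -/
def MemWlocx1 (n : ℕ) (p s α : ℝ) (f : Heis n → ℝ) : Prop :=
  Measurable f ∧ ∀ r R : ℝ, 0 < r → r < R →
    (∫⁻ ξ in strip n r R, ENNReal.ofReal (|f ξ| ^ p)) < ⊤ ∧
    gagSem p s α (strip n r R) f < ⊤

/-- `f ∈ L^{p-1}_{sp,α}(ℍⁿ)`. -/
def MemLsp (n : ℕ) (p s α : ℝ) (f : Heis n → ℝ) : Prop :=
  Measurable f ∧
  (∀ K : Set (Heis n), IsCompact K →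
    (∫⁻ ξ in K, ENNReal.ofReal (|f ξ| ^ (p - 1))) < ⊤) ∧
  (∫⁻ ξ, ENNReal.ofReal (|f ξ| ^ (p - 1) /
      ((1 + hd ξ) ^ (hQ n + s * p) * (1 + znorm ξ) ^ α))) < ⊤

/-- `φ ∈ W^{s,p,α}(Ω)`. -/
def MemW (n : ℕ) (p s α : ℝ) (Ω : Set (Heis n)) (φ : Heis n → ℝ) : Prop :=
  Measurable φ ∧ (∫⁻ ξ in Ω, ENNReal.ofReal (|φ ξ| ^ p)) < ⊤ ∧ gagSem p s α Ω φ < ⊤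

/-- `φ ∈ W^{s,p}(Ω)` (the case `α = 0`). -/
def MemW0 (n : ℕ) (p s : ℝ) (Ω : Set (Heis n)) (φ : Heis n → ℝ) : Prop :=
  Measurable φ ∧ (∫⁻ ξ in Ω, ENNReal.ofReal (|φ ξ| ^ p)) < ⊤ ∧ gagSem0 p s Ω φ < ⊤

/-- `f ∈ W^{s,p}_{loc}(ℍⁿ₊)`. -/
def MemWloc0 (n : ℕ) (p s : ℝ) (f : Heis n → ℝ) : Prop :=
  Measurable f ∧ ∀ K : Set (Heis n), IsCompact K → K ⊆ halfSpace n →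
    (∫⁻ ξ in K, ENNReal.ofReal (|f ξ| ^ p)) < ⊤ ∧ gagSem0 p s K f < ⊤

/-- `f ∈ L^{p-1}_{sp}(ℍⁿ)`. -/
def MemLsp0 (n : ℕ) (p s : ℝ) (f : Heis n → ℝ) : Prop :=
  Measurable f ∧
  (∀ K : Set (Heis n), IsCompact K →
    (∫⁻ ξ in K, ENNReal.ofReal (|f ξ| ^ (p - 1))) < ⊤) ∧
  (∫⁻ ξ, ENNReal.ofReal (|f ξ| ^ (p - 1) / (1 + hd ξ) ^ (hQ n + s * p))) < ⊤

/-- Surface measure of the unit sphere `S^{m-1} ⊂ ℝ^m`: `|S^{m-1}| = 2π^{m/2}/Γ(m/2)`. -/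
def sphereArea (m : ℕ) : ℝ := 2 * Real.pi ^ ((m : ℝ) / 2) / Real.Gamma ((m : ℝ) / 2)

/-- `ℐ(k,θ,α) = (∫₀^∞ (1+t²)^{-(k+2+θ)/4} dt) (∫₀^∞ r^{k-2}(1+r²)^{-(k+θ+α)/2} dr)`. -/
def calI (k : ℕ) (θ α : ℝ) : ℝ :=
  (∫ t in Set.Ioi (0 : ℝ), (1 + t ^ 2) ^ (-(((k : ℝ) + 2 + θ) / 4))) *
  (∫ r in Set.Ioi (0 : ℝ), r ^ ((k : ℝ) - 2) * (1 + r ^ 2) ^ (-(((k : ℝ) + θ + α) / 2)))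

/-- `Λ_{s,p,α} = 2∫₀¹ |1-τ^{(sp+α-1)/p}|^p/(1-τ)^{1+sp+α} dτ + 2/(sp+α)`. -/
def LamC (s p α : ℝ) : ℝ :=
  2 * (∫ τ in Set.Ioo (0 : ℝ) 1,
      |1 - τ ^ ((s * p + α - 1) / p)| ^ p / (1 - τ) ^ (1 + s * p + α)) + 2 / (s * p + α)

/-- `u_β(τ) = τ^β` for `τ > 0`, extended by `0`. -/
def ubeta (β τ : ℝ) : ℝ := if 0 < τ then τ ^ β else 0

/-- `λ(β,s,p)`. -/
def lam (p s β : ℝ) : ℝ :=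
  2 * (∫ τ in Set.Ioo (0 : ℝ) 1,
      Jp p (1 - τ ^ β) * (1 - τ ^ (s * p - 1 - β * (p - 1))) / (1 - τ) ^ (1 + s * p)) +
  2 / (s * p)

/-- `λ_ε(β,s,p)`. -/
def lamEps (p s β ε : ℝ) : ℝ :=
  2 * (∫ τ in Set.Ioo (0 : ℝ) (1 / (1 + ε)), Jp p (1 - τ ^ β) / |1 - τ| ^ (1 + s * p)) +
  2 * (∫ τ in Set.Ioi (1 + ε), Jp p (1 - τ ^ β) / |1 - τ| ^ (1 + s * p)) +
  2 / (s * p)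

/-- The box `D_{R₀}`. -/
def boxD (n : ℕ) (R₀ : ℝ) : Set (Heis n) :=
  {ξ | (∀ i, |ξ.1 i| ≤ R₀) ∧ (∀ i, |ξ.2.1 i| ≤ R₀) ∧ |ξ.2.2| ≤ R₀ ^ 2}

/-- The box `D_{R₀,t}`. -/
def boxDt (n : ℕ) (R₀ : ℝ) : Set (Heis n) :=
  {ξ | (∀ i, |ξ.1 i| ≤ R₀) ∧ (∀ i, |ξ.2.1 i| ≤ R₀) ∧ |ξ.2.2| ≤ R₀ ^ 2 + R₀}

/-- The one-dimensional truncated kernel integral `g_ε^{(1)}`. -/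
def gOneDim (p s ε x : ℝ) : ℝ :=
  ∫ y in {y : ℝ | ε ≤ |x - y|}, Jp p (x ^ s - (max y 0) ^ s) / |x - y| ^ (1 + s * p)

lemma Jp_of_pos {p t : ℝ} (ht : 0 < t) : Jp p t = t ^ (p - 1) := by
  rw [Jp, abs_of_pos ht, ← rpow_add_one ht.ne']
  congr 1; ring

lemma Jp_neg (p t : ℝ) : Jp p (-t) = -Jp p t := by
  simp [Jp]

lemma Jp_mul {p c : ℝ} (hc : 0 < c) (t : ℝ) : Jp p (c * t) = c ^ (p - 1) * Jp p t := by
  rw [← Jp_of_pos hc, Jp, Jp, Jp, abs_mul, mul_rpow (abs_nonneg _) (abs_nonneg _)]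
  ring

/-- Homogeneity in `x`, from the substitution `y = x z`. -/
lemma gOneDim_scale (p s ε : ℝ) {x : ℝ} (hx : 0 < x) :
    gOneDim p s ε x = x ^ (-s) * gOneDim p s (ε / x) 1 := by
  have hm : ∀ ε x : ℝ, MeasurableSet {y : ℝ | ε ≤ |x - y|} := fun ε x =>
    measurableSet_le measurable_const (by fun_prop)
  unfold gOneDim
  rw [← integral_indicator (hm _ _), ← integral_indicator (hm _ _)]
  set Φ : ℝ → ℝ := Set.indicator {y : ℝ | ε ≤ |x - y|}
    fun y => Jp p (x ^ s - (max y 0) ^ s) / |x - y| ^ (1 + s * p) with hΦ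
  have h1 : ∫ y, Φ y = x * ∫ z, Φ (x * z) := by
    rw [Measure.integral_comp_mul_left, abs_of_pos (inv_pos.2 hx), smul_eq_mul,
      mul_inv_cancel_left₀ hx.ne']
  rw [h1, ← integral_const_mul, ← integral_const_mul]
  congr 1
  funext z
  have habs : |x - x * z| = x * |1 - z| := by
    rw [← mul_one_sub, abs_mul, abs_of_pos hx]
  have hmem : ε ≤ |x - x * z| ↔ ε / x ≤ |1 - z| := by
    rw [habs, div_le_iff₀' hx]
  simp only [hΦ, Set.indicator_apply, Set.mem_ofPred_eq, hmem]
  split_ifs with h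
  · have hmax : max (x * z) 0 = x * max z 0 := by
      rw [mul_max_of_nonneg _ _ hx.le, mul_zero]
    have hsub : x ^ s - x ^ s * max z 0 ^ s = x ^ s * (1 ^ s - max z 0 ^ s) := by
      rw [Real.one_rpow]; ring
    rw [habs, hmax, mul_rpow hx.le (le_max_right _ _), hsub, Jp_mul (rpow_pos_of_pos hx s),
      mul_rpow hx.le (abs_nonneg _), ← rpow_mul hx.le]
    have hpow : x * x ^ (s * (p - 1)) = x ^ (-s) * x ^ (1 + s * p) := by
      nth_rewrite 1 [← Real.rpow_one x]
      rw [← rpow_add hx, ← rpow_add hx]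
      congr 1; ring
    have := (rpow_pos_of_pos hx (1 + s * p)).ne'
    rw [mul_div_mul_comm, ← mul_assoc, ← mul_div_assoc x, hpow, mul_div_cancel_right₀ _ this]
  · simp

/-- The integrand of `g_δ(1)` on `(0, 1)`. -/
def innerKer (p s z : ℝ) : ℝ := (1 - z ^ s) ^ (p - 1) / (1 - z) ^ (1 + s * p)

/-- The negative of the integrand of `g_δ(1)` on `(1, ∞)`, transported to `(0, 1)` by
`y = 1 / z` (Jacobian included). -/
def outerKer (p s z : ℝ) : ℝ := innerKer p s z * z ^ (s - 1)

lemma innerKer_continuousOn {p s b : ℝ} (hp1 : 1 < p) (hs0 : 0 < s) (hb : b < 1) :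
    ContinuousOn (innerKer p s) (Set.Icc 0 b) := by
  unfold innerKer
  refine ContinuousOn.div ?_ ?_ ?_
  · refine ContinuousOn.rpow_const ?_ fun z _ => Or.inr (by linarith)
    exact continuousOn_const.sub (continuousOn_id.rpow_const fun z _ => Or.inr hs0.le)
  · refine ContinuousOn.rpow_const (by fun_prop) fun z hz => Or.inl ?_
    have := hz.2
    linarith
  · intro z hz
    have := hz.2
    exact (rpow_pos_of_pos (by linarith) _).ne'

lemma innerKer_integrableOn {p s b : ℝ} (hp1 : 1 < p) (hs0 : 0 < s) (hb : b < 1) :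
    IntegrableOn (innerKer p s) (Set.Ioc 0 b) :=
  ((innerKer_continuousOn hp1 hs0 hb).integrableOn_Icc).mono_set Set.Ioc_subset_Icc_self

lemma outerKer_integrableOn {p s b : ℝ} (hp1 : 1 < p) (hs0 : 0 < s) (hb0 : 0 ≤ b) (hb : b < 1) :
    IntegrableOn (outerKer p s) (Set.Ioc 0 b) := by
  have h : IntervalIntegrable (fun z : ℝ => innerKer p s z * z ^ (s - 1)) volume 0 b := by
    refine (intervalIntegral.intervalIntegrable_rpow' (by linarith)).continuousOn_mul ?_
    rw [Set.uIcc_of_le hb0]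
    exact innerKer_continuousOn hp1 hs0 hb
  rwa [intervalIntegrable_iff_integrableOn_Ioc_of_le hb0] at h

/-- The primitive behind the cancellation:
`d/dz [(1 - z^s)^p (1 - z)^{-sp}] = sp (innerKer - outerKer)`. -/
lemma hasDerivAt_primitive {p s z : ℝ} (hs0 : 0 < s) (hz0 : 0 < z) (hz1 : z < 1) :
    HasDerivAt (fun z : ℝ => (1 - z ^ s) ^ p * (1 - z) ^ (-(s * p)))
      (s * p * (innerKer p s z - outerKer p s z)) z := by
  have hA : 0 < 1 - z ^ s := sub_pos.2 (rpow_lt_one hz0.le hz1 hs0)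
  have hB : 0 < 1 - z := sub_pos.2 hz1
  have d1 : HasDerivAt (fun z : ℝ => 1 - z ^ s) (-(s * z ^ (s - 1))) z :=
    (hasDerivAt_rpow_const (Or.inl hz0.ne')).const_sub 1
  have d2 : HasDerivAt (fun z : ℝ => 1 - z) (-1) z := (hasDerivAt_id z).const_sub 1
  have d := (d1.rpow_const (p := p) (Or.inl hA.ne')).mul
    (d2.rpow_const (p := -(s * p)) (Or.inl hB.ne'))
  refine d.congr_deriv ?_
  have e1 : (1 - z ^ s) ^ p = (1 - z ^ s) ^ (p - 1) * (1 - z ^ s) := by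
    rw [← rpow_add_one hA.ne']; congr 1; ring
  have e2 : (1 - z) ^ (-(s * p)) = (1 - z) / (1 - z) ^ (1 + s * p) := by
    rw [rpow_neg hB.le, rpow_add hB, Real.rpow_one]
    field_simp
  have e3 : (1 - z) ^ (-(s * p) - 1) = 1 / (1 - z) ^ (1 + s * p) := by
    rw [one_div, ← rpow_neg hB.le]; congr 1; ring
  have e4 : z ^ s = z ^ (s - 1) * z := by
    rw [← rpow_add_one hz0.ne']; congr 1; ring
  rw [e1, e2, e3, innerKer.eq_1 p s z, outerKer, innerKer]
  have := (rpow_pos_of_pos hB (1 + s * p)).ne'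
  field_simp
  rw [e4]
  ring

lemma integral_inner_sub_outer {p s a : ℝ} (hp1 : 1 < p) (hs0 : 0 < s) (ha0 : 0 ≤ a)
    (ha1 : a < 1) :
    (∫ z in Set.Ioc 0 a, innerKer p s z) - ∫ z in Set.Ioc 0 a, outerKer p s z
      = ((1 - a ^ s) ^ p * (1 - a) ^ (-(s * p)) - 1) / (s * p) := by
  have hi := innerKer_integrableOn hp1 hs0 ha1
  have ho := outerKer_integrableOn hp1 hs0 ha0 ha1
  have hsp : s * p ≠ 0 := (mul_pos hs0 (by linarith)).ne'
  have key := intervalIntegral.integral_eq_sub_of_hasDerivAt_of_le ha0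
    (f := fun z : ℝ => (1 - z ^ s) ^ p * (1 - z) ^ (-(s * p)))
    (f' := fun z => s * p * (innerKer p s z - outerKer p s z)) ?_
    (fun z hz => hasDerivAt_primitive hs0 hz.1 (hz.2.trans ha1)) ?_
  · rw [intervalIntegral.integral_const_mul, intervalIntegral.integral_of_le ha0,
      integral_sub hi ho, zero_rpow hs0.ne'] at key
    rw [eq_div_iff hsp, mul_comm, key]
    simp
  · refine ContinuousOn.mul ?_ ?_
    · refine ContinuousOn.rpow_const ?_ fun z _ => Or.inr (by linarith)
      exact continuousOn_const.sub (continuousOn_id.rpow_const fun z _ => Or.inr hs0.le)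
    · refine ContinuousOn.rpow_const (by fun_prop) fun z hz => Or.inl ?_
      have := hz.2
      linarith
  · rw [intervalIntegrable_iff_integrableOn_Ioc_of_le ha0]
    exact (hi.sub ho).const_mul _

/-- The contribution of the half-line on which `y₊` vanishes. -/
lemma integral_Iic_part {p s : ℝ} (hp1 : 1 < p) (hs0 : 0 < s) :
    IntegrableOn (fun y : ℝ => (1 - y) ^ (-(1 + s * p))) (Set.Iic 0) ∧
    ∫ y in Set.Iic (0 : ℝ), (1 - y) ^ (-(1 + s * p)) = 1 / (s * p) := by
  have hsp : 0 < s * p := mul_pos hs0 (by linarith)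
  have himg : (fun y : ℝ => 1 - y) '' Set.Iic 0 = Set.Ici 1 := by simp
  have hinj : Set.InjOn (fun y : ℝ => 1 - y) (Set.Iic 0) := fun a _ b _ h => by
    simpa using h
  have hd : ∀ y ∈ Set.Iic (0 : ℝ), HasDerivWithinAt (fun y : ℝ => 1 - y) (-1) (Set.Iic 0) y :=
    fun y _ => ((hasDerivAt_id y).const_sub 1).hasDerivWithinAt
  have h1 := integrableOn_image_iff_integrableOn_abs_deriv_smul measurableSet_Iic hd hinj
    fun t : ℝ => t ^ (-(1 + s * p))
  have h2 := integral_image_eq_integral_abs_deriv_smul measurableSet_Iic hd hinj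
    fun t : ℝ => t ^ (-(1 + s * p))
  simp only [abs_neg, abs_one, one_smul, himg] at h1 h2
  refine ⟨h1.1 ?_, ?_⟩
  · rw [integrableOn_Ici_iff_integrableOn_Ioi]
    exact integrableOn_Ioi_rpow_of_lt (by linarith) one_pos
  · rw [← h2, integral_Ici_eq_integral_Ioi, integral_Ioi_rpow_of_lt (by linarith) one_pos]
    rw [Real.one_rpow, neg_div, ← div_neg]
    congr 1; ring

/-- The change of variables `y = 1 / z` on `(1, ∞)`. -/
lemma integral_Ici_part {p s c : ℝ} (hp1 : 1 < p) (hs0 : 0 < s) (hc : 1 < c) :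
    IntegrableOn (fun y : ℝ => Jp p (1 - y ^ s) / |1 - y| ^ (1 + s * p)) (Set.Ici c) ∧
    ∫ y in Set.Ici c, Jp p (1 - y ^ s) / |1 - y| ^ (1 + s * p)
      = -∫ z in Set.Ioc 0 c⁻¹, outerKer p s z := by
  have hc0 : 0 < c := by linarith
  have himg : (fun z : ℝ => z⁻¹) '' Set.Ioc 0 c⁻¹ = Set.Ici c := by
    rw [Set.image_inv_eq_inv]
    ext y
    simp only [Set.mem_inv, Set.mem_Ioc, Set.mem_Ici, inv_pos]
    constructor
    · rintro ⟨h0, h⟩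
      exact (inv_le_inv₀ h0 hc0).1 h
    · intro h
      have h0 : 0 < y := hc0.trans_le h
      exact ⟨h0, (inv_le_inv₀ h0 hc0).2 h⟩
  have hinj : Set.InjOn (fun z : ℝ => z⁻¹) (Set.Ioc 0 c⁻¹) := inv_injective.injOn
  have hd : ∀ z ∈ Set.Ioc 0 c⁻¹,
      HasDerivWithinAt (fun z : ℝ => z⁻¹) (-(z ^ 2)⁻¹) (Set.Ioc 0 c⁻¹) z :=
    fun z hz => (hasDerivAt_inv hz.1.ne').hasDerivWithinAt
  have hker : ∀ z ∈ Set.Ioc 0 c⁻¹, |-(z ^ 2)⁻¹| •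
      (Jp p (1 - z⁻¹ ^ s) / |1 - z⁻¹| ^ (1 + s * p)) = -outerKer p s z := by
    intro z ⟨hz0, hzc⟩
    have hz1 : z < 1 := hzc.trans_lt (inv_lt_one_of_one_lt₀ hc)
    have hA : 0 < 1 - z ^ s := sub_pos.2 (rpow_lt_one hz0.le hz1 hs0)
    have hB : 0 < 1 - z := sub_pos.2 hz1
    have e1 : 1 - z⁻¹ ^ s = -(z ^ (-s) * (1 - z ^ s)) := by
      rw [inv_rpow hz0.le, rpow_neg hz0.le]
      have := (rpow_pos_of_pos hz0 s).ne'
      field_simp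
      ring
    have e2 : |1 - z⁻¹| = z⁻¹ * (1 - z) := by
      rw [← abs_of_pos (mul_pos (inv_pos.2 hz0) hB), abs_sub_comm]
      congr 1
      field_simp
    rw [e1, e2, Jp_neg, Jp_mul (rpow_pos_of_pos hz0 _), Jp_of_pos hA,
      mul_rpow (inv_pos.2 hz0).le hB.le, abs_neg, abs_of_pos (by positivity), outerKer,
      innerKer, ← rpow_mul hz0.le, inv_rpow hz0.le, smul_eq_mul]
    have e3 : z ^ (s - 1) = (z ^ 2)⁻¹ * z ^ (-s * (p - 1)) * z ^ (1 + s * p) := by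
      rw [← Real.rpow_natCast, ← rpow_neg hz0.le, ← rpow_add hz0, ← rpow_add hz0]
      congr 1; push_cast; ring
    rw [e3]
    have := (rpow_pos_of_pos hB (1 + s * p)).ne'
    have := (rpow_pos_of_pos hz0 (1 + s * p)).ne'
    field_simp
  have ho := outerKer_integrableOn hp1 hs0 (inv_pos.2 hc0).le (inv_lt_one_of_one_lt₀ hc)
  have h1 := integrableOn_image_iff_integrableOn_abs_deriv_smul measurableSet_Ioc hd hinj
    fun y : ℝ => Jp p (1 - y ^ s) / |1 - y| ^ (1 + s * p)
  have h2 := integral_image_eq_integral_abs_deriv_smul measurableSet_Ioc hd hinj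
    fun y : ℝ => Jp p (1 - y ^ s) / |1 - y| ^ (1 + s * p)
  rw [himg] at h1 h2
  refine ⟨h1.2 (ho.neg.congr_fun (fun z hz => (hker z hz).symm) measurableSet_Ioc), ?_⟩
  rw [h2, setIntegral_congr_fun measurableSet_Ioc hker, integral_neg]

/-- Exact value of `g_δ(1)`: after cancellation only a boundary term and the integral over the
mismatch `(1 - δ, 1 / (1 + δ)]` of the two truncations survive. -/
lemma gOneDim_one_eq {p s δ : ℝ} (hp1 : 1 < p) (hs0 : 0 < s) (hδ0 : 0 < δ) (hδ1 : δ < 1) :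
    gOneDim p s δ 1 = (1 - (1 - δ) ^ s) ^ p * δ ^ (-(s * p)) / (s * p)
      - ∫ z in Set.Ioc (1 - δ) (1 + δ)⁻¹, outerKer p s z := by
  have hset : {y : ℝ | δ ≤ |1 - y|} = (Set.Iic 0 ∪ Set.Ioc 0 (1 - δ)) ∪ Set.Ici (1 + δ) := by
    rw [Set.Iic_union_Ioc_eq_Iic (by linarith)]
    ext y
    simp only [Set.mem_ofPred_eq, Set.mem_union, Set.mem_Iic, Set.mem_Ici, le_abs]
    constructor <;> rintro (h | h)
    · left; linarith
    · right; linarith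
    · left; linarith
    · right; linarith
  set F : ℝ → ℝ := fun y => Jp p (1 ^ s - (max y 0) ^ s) / |1 - y| ^ (1 + s * p) with hF
  have f1 : Set.EqOn F (fun y => (1 - y) ^ (-(1 + s * p))) (Set.Iic 0) := by
    intro y hy
    have hy : y ≤ 0 := hy
    have hB : 0 < 1 - y := by linarith
    simp only [hF]
    rw [max_eq_right hy, zero_rpow hs0.ne', Real.one_rpow, sub_zero, Jp_of_pos one_pos, Real.one_rpow,
      abs_of_pos hB, rpow_neg hB.le, one_div]
  have f2 : Set.EqOn F (innerKer p s) (Set.Ioc 0 (1 - δ)) := by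
    intro y ⟨hy0, hy1⟩
    have hB : 0 < 1 - y := by linarith
    have hA : 0 < 1 - y ^ s := sub_pos.2 (rpow_lt_one hy0.le (by linarith) hs0)
    simp only [hF]
    rw [max_eq_left hy0.le, Real.one_rpow, Jp_of_pos hA, abs_of_pos hB, innerKer]
  have f3 : Set.EqOn F (fun y => Jp p (1 - y ^ s) / |1 - y| ^ (1 + s * p))
      (Set.Ici (1 + δ)) := by
    intro y hy
    have hy : 1 + δ ≤ y := hy
    simp only [hF]
    rw [max_eq_left (by linarith), Real.one_rpow]
  obtain ⟨i1, v1⟩ := integral_Iic_part (p := p) hp1 hs0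
  have i2 := innerKer_integrableOn (b := 1 - δ) hp1 hs0 (by linarith)
  obtain ⟨i3, v3⟩ := integral_Ici_part (p := p) (c := 1 + δ) hp1 hs0 (by linarith)
  rw [← integrableOn_congr_fun f1 measurableSet_Iic] at i1
  rw [← integrableOn_congr_fun f2 measurableSet_Ioc] at i2
  rw [← integrableOn_congr_fun f3 measurableSet_Ici] at i3
  rw [← setIntegral_congr_fun measurableSet_Iic f1] at v1
  rw [← setIntegral_congr_fun measurableSet_Ici f3] at v3
  have v2 := setIntegral_congr_fun (μ := volume) measurableSet_Ioc f2
  have d1 : Disjoint (Set.Iic (0 : ℝ)) (Set.Ioc 0 (1 - δ)) :=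
    Set.Iic_disjoint_Ioc le_rfl
  have d2 : Disjoint (Set.Iic (0 : ℝ) ∪ Set.Ioc 0 (1 - δ)) (Set.Ici (1 + δ)) := by
    rw [Set.Iic_union_Ioc_eq_Iic (by linarith)]
    exact Set.Iic_disjoint_Ici.2 (by linarith)
  have hab : 1 - δ ≤ (1 + δ)⁻¹ := by
    rw [le_inv_comm₀ (by linarith) (by linarith), inv_eq_one_div, le_div_iff₀ (by linarith)]
    nlinarith
  have hb1 : (1 + δ)⁻¹ < 1 := inv_lt_one_of_one_lt₀ (by linarith)
  have ho := outerKer_integrableOn (p := p) hp1 hs0 (by linarith : 0 ≤ (1 + δ)⁻¹) hb1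
  have hsplit : ∫ z in Set.Ioc 0 (1 + δ)⁻¹, outerKer p s z =
      (∫ z in Set.Ioc 0 (1 - δ), outerKer p s z) +
        ∫ z in Set.Ioc (1 - δ) (1 + δ)⁻¹, outerKer p s z := by
    have hu := Set.Ioc_union_Ioc_eq_Ioc (by linarith : 0 ≤ 1 - δ) hab
    rw [← hu] at ho ⊢
    exact setIntegral_union (Set.Ioc_disjoint_Ioc_of_le le_rfl) measurableSet_Ioc
      (ho.mono_set Set.subset_union_left) (ho.mono_set Set.subset_union_right)
  have hprim := integral_inner_sub_outer (p := p) (a := 1 - δ) hp1 hs0 (by linarith)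
    (by linarith)
  rw [_root_.sub_sub_cancel, sub_div] at hprim
  change ∫ y in {y : ℝ | δ ≤ |1 - y|}, F y = _
  rw [hset, setIntegral_union d2 measurableSet_Ici (i1.union i2) i3,
    setIntegral_union d1 measurableSet_Ioc i1 i2, v1, v2, v3, hsplit]
  linarith

/-- Both surviving terms have size `δ ^ (p (1 - s))`, because `1 - z ^ s ≤ 1 - z` on `[0, 1]`
and the mismatch interval has length at most `δ ^ 2`. -/
lemma abs_gOneDim_one_le {p s δ : ℝ} (hp1 : 1 < p) (hs0 : 0 < s) (hs1 : s < 1) (hδ0 : 0 < δ)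
    (hδ1 : δ ≤ 1 / 2) :
    |gOneDim p s δ 1| ≤ (1 / (s * p) + 2 * 2 ^ (1 + s * p)) * δ ^ (p * (1 - s)) := by
  have hsp : 0 < s * p := mul_pos hs0 (by linarith)
  have hle : ∀ z : ℝ, 0 < z → z < 1 → 1 - z ^ s ≤ 1 - z := fun z h0 h1 =>
    sub_le_sub_left (self_le_rpow_of_le_one h0.le h1.le hs1.le) 1
  have hpos : ∀ z : ℝ, 0 < z → z < 1 → 0 < 1 - z ^ s := fun z h0 h1 =>
    sub_pos.2 (rpow_lt_one h0.le h1 hs0)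
  rw [gOneDim_one_eq hp1 hs0 hδ0 (by linarith), add_mul]
  refine (abs_sub _ _).trans (add_le_add ?_ ?_)
  · have h0 := hpos (1 - δ) (by linarith) (by linarith)
    have h1 := hle (1 - δ) (by linarith) (by linarith)
    rw [_root_.sub_sub_cancel] at h1
    rw [abs_of_nonneg (by positivity), div_eq_inv_mul, one_div]
    gcongr
    calc (1 - (1 - δ) ^ s) ^ p * δ ^ (-(s * p)) ≤ δ ^ p * δ ^ (-(s * p)) := by gcongr
      _ = δ ^ (p * (1 - s)) := by rw [← rpow_add hδ0]; congr 1; ring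
  · set M : ℝ := δ ^ (p - 1) / (δ / 2) ^ (1 + s * p) * 2 with hM
    have hb1 : (1 + δ)⁻¹ ≤ 1 - δ / 2 := by
      rw [inv_le_comm₀ (by linarith) (by linarith), inv_eq_one_div, div_le_iff₀ (by linarith)]
      nlinarith
    have hbd : ∀ z ∈ Set.Ioc (1 - δ) (1 + δ)⁻¹, ‖outerKer p s z‖ ≤ M := by
      intro z ⟨hza, hzb⟩
      have hz0 : 0 < z := by linarith
      have hz1 : z < 1 := by linarith
      have hA := hpos z hz0 hz1
      have hB : δ / 2 ≤ 1 - z := by linarith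
      have hz : z ^ (s - 1) ≤ 2 := by
        calc z ^ (s - 1) ≤ z ^ (-1 : ℝ) :=
              rpow_le_rpow_of_exponent_ge hz0 hz1.le (by linarith)
          _ = z⁻¹ := rpow_neg_one z
          _ ≤ 2 := by rw [inv_le_comm₀ hz0 two_pos]; linarith
      have hAδ : 1 - z ^ s ≤ δ := (hle z hz0 hz1).trans (by linarith)
      have hBpos : 0 < 1 - z := by linarith
      rw [hM, outerKer, innerKer, Real.norm_of_nonneg (by positivity)]
      gcongr
    have hlen : volume.real (Set.Ioc (1 - δ) (1 + δ)⁻¹) ≤ δ ^ 2 := by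
      rw [Real.volume_real_Ioc]
      refine max_le ?_ (by positivity)
      rw [sub_le_iff_le_add, inv_le_iff_one_le_mul₀ (by linarith)]
      nlinarith [pow_pos hδ0 3]
    calc |∫ z in Set.Ioc (1 - δ) (1 + δ)⁻¹, outerKer p s z|
        ≤ M * volume.real (Set.Ioc (1 - δ) (1 + δ)⁻¹) :=
          norm_setIntegral_le_of_norm_le_const measure_Ioc_lt_top hbd
      _ ≤ M * δ ^ 2 := by gcongr
      _ = 2 * 2 ^ (1 + s * p) * δ ^ (p * (1 - s)) := by
          have e : δ ^ (p * (1 - s)) = δ ^ (p - 1) * δ ^ 2 * (δ ^ (1 + s * p))⁻¹ := by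
            rw [← Real.rpow_natCast, ← rpow_neg hδ0.le, ← rpow_add hδ0, ← rpow_add hδ0]
            congr 1; push_cast; ring
          rw [hM, e, div_rpow hδ0.le two_pos.le]
          field_simp

/-- Lemma 3.3: `g_ε^{(1)} → 0` uniformly on compact subsets of
`(0,∞)` as `ε → 0⁺`. -/
theorem gOneDim_tendsto_uniformly (p s : ℝ) (hp1 : 1 < p) (hs0 : 0 < s) (hs1 : s < 1)
    (K : Set ℝ) (hK : IsCompact K) (hKsub : K ⊆ Set.Ioi (0 : ℝ)) :
    TendstoUniformlyOn (fun ε x => gOneDim p s ε x) (fun _ => 0)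
      (nhdsWithin (0 : ℝ) (Set.Ioi 0)) K := by
  obtain ⟨m, hm0, hm⟩ : ∃ m : ℝ, 0 < m ∧ ∀ x ∈ K, m ≤ x := by
    rcases K.eq_empty_or_nonempty with rfl | hne
    · exact ⟨1, one_pos, by simp⟩
    · obtain ⟨m, hmK, hm⟩ := hK.exists_isLeast hne
      exact ⟨m, hKsub hmK, fun x hx => hm hx⟩
  have hq : 0 < p * (1 - s) := mul_pos (by linarith) (by linarith)
  have hsp : 0 < s * p := mul_pos hs0 (by linarith)
  set C : ℝ := 1 / (s * p) + 2 * 2 ^ (1 + s * p) with hC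
  have hC0 : 0 < C := by positivity
  have hbound : ∀ ε : ℝ, 0 < ε → ε ≤ m / 2 → ∀ x ∈ K,
      |gOneDim p s ε x| ≤ m ^ (-s) * (C * (ε / m) ^ (p * (1 - s))) := by
    intro ε h0 h1 x hx
    have hmx := hm x hx
    have hx0 : 0 < x := hm0.trans_le hmx
    rw [gOneDim_scale p s ε hx0, abs_mul, abs_of_pos (rpow_pos_of_pos hx0 _)]
    have hδ : ε / x ≤ 1 / 2 := by
      rw [div_le_iff₀ hx0]; linarith
    refine mul_le_mul (rpow_le_rpow_of_nonpos hm0 hmx (by linarith)) ?_ (abs_nonneg _)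
      (by positivity)
    refine (abs_gOneDim_one_le hp1 hs0 hs1 (by positivity) hδ).trans ?_
    gcongr
  have hlim : Tendsto (fun ε : ℝ => m ^ (-s) * (C * (ε / m) ^ (p * (1 - s))))
      (nhdsWithin (0 : ℝ) (Set.Ioi 0)) (𝓝 0) := by
    have hcont : Continuous fun ε : ℝ => m ^ (-s) * (C * (ε / m) ^ (p * (1 - s))) :=
      continuous_const.mul (continuous_const.mul
        ((continuous_id.div_const m).rpow_const fun _ => Or.inr hq.le))
    have := hcont.tendsto 0
    rw [zero_div, zero_rpow hq.ne', mul_zero, mul_zero] at this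
    exact this.mono_left nhdsWithin_le_nhds
  rw [Metric.tendstoUniformlyOn_iff]
  intro η hη
  filter_upwards [hlim.eventually (gt_mem_nhds hη), self_mem_nhdsWithin,
    nhdsWithin_le_nhds (Iic_mem_nhds (half_pos hm0))] with ε h1 h2 h3 x hx
  rw [dist_zero_left, Real.norm_eq_abs]
  exact (hbound ε h2 h3 x hx).trans_lt h1
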